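/- Let k, m, n, t ∈ ℕ with 0 ≤ k ≤ m ≤ n, and set I(t) = (1/(2π))·∫_{-1}^{1} [4(1-x²)·∏_{j=1}^{k}(1-2(2x²-1)q^{2j}+q^{4j}) / √(1-x²)] · C_{m-k}(x;q^{2k+2}|q²) · C_{n-k}(x;q^{2k+2}|q²) · U_{m+n-2t}(x) dx. Then I(t) = 0 whenever m < t and 2t ≤ m+n, while for 0 ≤ t ≤ m one has I(t) = (-1)^k q^{k(k+1)} (q²;q²)_k · [(q^{2k+2};q²)_{m+n-2k} / (q²;q²)_{m+n-k}] · [(q^{2k+2};q²)_{m-k} / (q²;q²)_{m-k}] · [(q^{2k+2};q²)_{n-k} / (q²;q²)_{n-k}] · R_k(μ(t);1,1,q^{-2m-2},q^{-2n-2};q²). -/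

import Mathlib

open Finset Polynomial MeasureTheory Matrix
open scoped BigOperators ComplexOrder

noncomputable section

/-- q-shifted factorial `(a;p)_n`. -/
def qp (a p : ℂ) (n : ℕ) : ℂ := ∏ j ∈ Finset.range n, (1 - a * p ^ j)

/-- q-Racah polynomial `R_n(μ(x);α,β,γ,δ;p)`. -/
def qRacah (p α β γ δ : ℂ) (n x : ℕ) : ℂ :=
  ∑ k ∈ Finset.range (min n x + 1),
    qp (p ^ (-(n : ℤ))) p k * qp (α * β * p ^ (n + 1)) p k *
        qp (p ^ (-(x : ℤ))) p k * qp (γ * δ * p ^ (x + 1)) p k /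
      (qp (α * p) p k * qp (β * δ * p) p k * qp (γ * p) p k * qp p p k) * p ^ k

/-- `IsUltra C` says that for each base `p`, parameter `β` and degree `n`, `C p β n` is
the continuous q-ultraspherical polynomial: it has degree at most `n` and its values at
`(z+z⁻¹)/2` are given by the symmetric Laurent sum. -/
def IsUltra (C : ℂ → ℂ → ℕ → Polynomial ℂ) : Prop :=
  ∀ (p β : ℂ) (n : ℕ),
    (C p β n).degree ≤ (n : ℕ) ∧
      ∀ z : ℂ, z ≠ 0 →
        (C p β n).eval ((z + z⁻¹) / 2) =
          ∑ r ∈ Finset.range (n + 1),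
            qp β p r * qp β p (n - r) / (qp p p r * qp p p (n - r)) * z ^ ((n : ℤ) - 2 * r)

/-- The matrix-valued polynomial `P_n` (entries in `Polynomial ℂ`); here `L = 2ℓ`. -/
def Pm (q : ℂ) (L : ℕ) (C : ℂ → ℂ → ℕ → Polynomial ℂ) (n : ℕ) :
    Matrix (Fin (L + 1)) (Fin (L + 1)) (Polynomial ℂ) :=
  Matrix.of fun i j =>
    ∑ k ∈ Finset.Icc (i : ℕ) (min L (n + (j : ℕ))),
      Polynomial.C
          ((-1 : ℂ) ^ k *
            q ^ ((n : ℤ) + (2 * (k : ℤ) + 1) * ((k : ℤ) - ((i : ℕ) : ℤ)) +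
                ((j : ℕ) : ℤ) * (2 * (k : ℤ) + 1) + 2 * (k : ℤ) * ((L : ℤ) + (n : ℤ) + 1) -
                (k : ℤ) ^ 2) *
            (qp (q ^ 2) (q ^ 2) k * qp (q ^ 2) (q ^ 2) (k + (i : ℕ)) /
              (qp (q ^ 2) (q ^ 2) (2 * k) * qp (q ^ 2) (q ^ 2) (i : ℕ))) *
            (qp (q ^ (-(2 * (L : ℤ)))) (q ^ 2) k *
                qp (q ^ (-(2 * ((j : ℕ) : ℤ) + 2 * (n : ℤ)))) (q ^ 2) k /
              (qp (q ^ 2) (q ^ 2) k * qp (q ^ (2 * (L : ℤ) + 4)) (q ^ 2) k)) *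
            (qp (q ^ 2) (q ^ 2) (n + (j : ℕ) - k) /
              qp (q ^ (4 * (k : ℤ) + 4)) (q ^ 2) (n + (j : ℕ) - k)) *
            qRacah (q ^ 2) 1 1 (q ^ (-(2 * (n : ℤ) + 2 * ((j : ℕ) : ℤ) + 2)))
              (q ^ (-(2 * (L : ℤ) + 2))) k (j : ℕ)) *
        (C (q ^ 2) (q ^ (-(2 * (k : ℤ)))) (k - (i : ℕ)) *
          C (q ^ 2) (q ^ (2 * (k : ℤ) + 2)) (n + (j : ℕ) - k))

/-- Evaluation of the matrix-valued polynomial `P_n` at a point. -/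
def evP (q : ℂ) (L : ℕ) (C : ℂ → ℂ → ℕ → Polynomial ℂ) (n : ℕ) (x : ℂ) :
    Matrix (Fin (L + 1)) (Fin (L + 1)) ℂ :=
  (Pm q L C n).map (Polynomial.eval x)

/-- The coefficients `α_t(m,n)` of the weight. -/
def alphaC (q : ℂ) (L m n t : ℕ) : ℂ :=
  q ^ (2 * (n : ℤ) * ((L : ℤ) + 1) - (n : ℤ) ^ 2 - (2 * (L : ℤ) + 3) * (t : ℤ) + (t : ℤ) ^ 2 -
      (L : ℤ) + (m : ℤ)) *
    ((1 - q ^ (2 * (L : ℤ) + 2)) / (1 - q ^ (2 * (m : ℤ) + 2))) *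
    (qp (q ^ 2) (q ^ 2) (L - n) * qp (q ^ 2) (q ^ 2) n / qp (q ^ 2) (q ^ 2) L) *
    ((-1 : ℂ) ^ ((m : ℤ) - (t : ℤ)) * qp (q ^ (2 * (m : ℤ) - 2 * (L : ℤ))) (q ^ 2) (n - t) /
      qp (q ^ (2 * (m : ℤ) + 4)) (q ^ 2) (n - t)) *
    (qp (q ^ (2 * (L : ℤ) + 4 - 2 * (t : ℤ))) (q ^ 2) t / qp (q ^ 2) (q ^ 2) t)

/-- The matrix weight `W(x)`. -/
def Wm (q : ℂ) (L : ℕ) (x : ℂ) : Matrix (Fin (L + 1)) (Fin (L + 1)) ℂ :=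
  Matrix.of fun i j =>
    ∑ t ∈ Finset.range (max (i : ℕ) (j : ℕ) + 1),
      alphaC q L (min (i : ℕ) (j : ℕ)) (max (i : ℕ) (j : ℕ)) t *
        (Polynomial.Chebyshev.U ℂ
            ((min (i : ℕ) (j : ℕ) : ℤ) + (max (i : ℕ) (j : ℕ) : ℤ) - 2 * (t : ℤ))).eval x

/-- The antidiagonal involution `J`. -/
def Jm (L : ℕ) : Matrix (Fin (L + 1)) (Fin (L + 1)) ℂ :=
  Matrix.of fun i j => if (i : ℕ) + (j : ℕ) = L then 1 else 0

/-- The diagonal leading-coefficient matrix `Γ_n`. -/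
def Gam (q : ℂ) (L n : ℕ) : Matrix (Fin (L + 1)) (Fin (L + 1)) ℂ :=
  Matrix.diagonal fun i =>
    2 ^ n * q ^ n * qp (q ^ (2 * ((i : ℕ) : ℤ) + 2)) (q ^ 2) n *
        qp (q ^ (2 * (L : ℤ) - 2 * ((i : ℕ) : ℤ) + 2)) (q ^ 2) n /
      (qp (q ^ 2) (q ^ 2) n * qp (q ^ (2 * (L : ℤ) + 4)) (q ^ 2) n)

/-- The squared-norm matrix `G_m`. -/
def Gmat (q : ℂ) (L m : ℕ) : Matrix (Fin (L + 1)) (Fin (L + 1)) ℂ :=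
  Matrix.diagonal fun i =>
    q ^ (2 * (m : ℤ) - (L : ℤ)) * (1 - q ^ (2 * (L : ℤ) + 2)) ^ 2 /
      ((1 - q ^ (2 * (m : ℤ) + 2 * ((i : ℕ) : ℤ) + 2)) *
        (1 - q ^ (2 * (L : ℤ) - 2 * ((i : ℕ) : ℤ) + 2 * (m : ℤ) + 2)))

/-- The unipotent lower triangular matrix `L(x)` of the LDU decomposition. -/
def Lm (q : ℂ) (L : ℕ) (C : ℂ → ℂ → ℕ → Polynomial ℂ) (x : ℂ) :
    Matrix (Fin (L + 1)) (Fin (L + 1)) ℂ :=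
  Matrix.of fun m k =>
    if (k : ℕ) ≤ (m : ℕ) then
      q ^ (((m : ℕ) : ℤ) - ((k : ℕ) : ℤ)) * qp (q ^ 2) (q ^ 2) (m : ℕ) *
          qp (q ^ 2) (q ^ 2) (2 * (k : ℕ) + 1) /
          (qp (q ^ 2) (q ^ 2) ((m : ℕ) + (k : ℕ) + 1) * qp (q ^ 2) (q ^ 2) (k : ℕ)) *
        (C (q ^ 2) (q ^ (2 * (k : ℕ) + 2)) ((m : ℕ) - (k : ℕ))).eval x
    else 0

/-- The claimed inverse of `L(x)`. -/
def Linv (q : ℂ) (L : ℕ) (C : ℂ → ℂ → ℕ → Polynomial ℂ) (x : ℂ) :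
    Matrix (Fin (L + 1)) (Fin (L + 1)) ℂ :=
  Matrix.of fun k n =>
    if (n : ℕ) ≤ (k : ℕ) then
      q ^ ((2 * ((k : ℕ) : ℤ) + 1) * (((k : ℕ) : ℤ) - ((n : ℕ) : ℤ))) *
          qp (q ^ 2) (q ^ 2) (k : ℕ) * qp (q ^ 2) (q ^ 2) ((k : ℕ) + (n : ℕ)) /
          (qp (q ^ 2) (q ^ 2) (2 * (k : ℕ)) * qp (q ^ 2) (q ^ 2) (n : ℕ)) *
        (C (q ^ 2) (q ^ (-(2 * ((k : ℕ) : ℤ)))) ((k : ℕ) - (n : ℕ))).eval x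
    else 0

/-- The constants `c_k(ℓ)`. -/
def ckC (q : ℂ) (L k : ℕ) : ℂ :=
  q ^ (-(L : ℤ)) / 4 * (1 - q ^ (4 * k + 2)) * qp (q ^ 2) (q ^ 2) (L + k + 1) *
      qp (q ^ 2) (q ^ 2) (L - k) * qp (q ^ 2) (q ^ 2) k ^ 4 /
    (qp (q ^ 2) (q ^ 2) (2 * k + 1) ^ 2 * qp (q ^ 2) (q ^ 2) L ^ 2)

/-- The diagonal part `T(x)` of the LDU decomposition. -/
def Tm (q : ℂ) (L : ℕ) (x : ℂ) : Matrix (Fin (L + 1)) (Fin (L + 1)) ℂ :=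
  Matrix.diagonal fun k =>
    ckC q L (k : ℕ) *
      (4 * ∏ j ∈ Finset.Icc 1 (k : ℕ), (1 - 2 * (2 * x ^ 2 - 1) * q ^ (2 * j) + q ^ (4 * j)))

/-- The coefficient matrix `M₁(z)` of the q-difference operator `D₁`. -/
def M1f (q : ℂ) (L : ℕ) (z : ℂ) : Matrix (Fin (L + 1)) (Fin (L + 1)) ℂ :=
  Matrix.of fun i j =>
    if (j : ℕ) = (i : ℕ) + 1 then
      -(q ^ (1 - ((i : ℕ) : ℤ)) * (1 - q ^ (2 * (i : ℕ) + 2)) / (1 - q ^ 2) ^ 2 *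
        (z / (1 - z ^ 2)))
    else if (j : ℕ) = (i : ℕ) then
      q ^ (1 - ((i : ℕ) : ℤ)) / (1 - q ^ 2) ^ 2 *
        ((1 - q ^ (2 * (i : ℕ) + 2) * z ^ 2) / (1 - z ^ 2))
    else 0

/-- `M₂(z) = J M₁(z) J`. -/
def M2f (q : ℂ) (L : ℕ) (z : ℂ) : Matrix (Fin (L + 1)) (Fin (L + 1)) ℂ :=
  Jm L * M1f q L z * Jm L

/-- The eigenvalue matrix `Λ_n(1)`. -/
def Lam1 (q : ℂ) (L n : ℕ) : Matrix (Fin (L + 1)) (Fin (L + 1)) ℂ :=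
  Matrix.diagonal fun j =>
    (q ^ (-((j : ℕ) : ℤ) - (n : ℤ) - 1) + q ^ (((j : ℕ) : ℤ) + (n : ℤ) + 1)) / (q⁻¹ - q) ^ 2

/-- The eigenvalue matrix `Λ_n(2) = J Λ_n(1) J`. -/
def Lam2 (q : ℂ) (L n : ℕ) : Matrix (Fin (L + 1)) (Fin (L + 1)) ℂ :=
  Jm L * Lam1 q L n * Jm L

/-- The diagonal coefficient matrix `K₁(z)` of the decoupled operator. -/
def K1f (q : ℂ) (L : ℕ) (z : ℂ) : Matrix (Fin (L + 1)) (Fin (L + 1)) ℂ :=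
  Matrix.diagonal fun i =>
    q ^ (1 - ((i : ℕ) : ℤ)) / (1 - q ^ 2) ^ 2 *
      ((1 - q ^ (2 * (i : ℕ) + 2) * z ^ 2) / (1 - z ^ 2))

/-- The symmetric Laurent polynomial `Ĉ_k(z;β|p)`. -/
def Chat (p β : ℂ) (k : ℕ) (z : ℂ) : ℂ :=
  ∑ r ∈ Finset.range (k + 1),
    qp β p r * qp β p (k - r) / (qp p p r * qp p p (k - r)) * z ^ ((k : ℤ) - 2 * (r : ℤ))

/-- The matrix polynomials `R_n(x) = L(x)ᵀ P_n(x) Γ_n⁻¹`. -/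
def Rmat (q : ℂ) (L : ℕ) (C : ℂ → ℂ → ℕ → Polynomial ℂ) (n : ℕ) (x : ℂ) :
    Matrix (Fin (L + 1)) (Fin (L + 1)) ℂ :=
  (Lm q L C x)ᵀ * evP q L C n x * (Gam q L n)⁻¹


lemma qp_zero (a p : ℂ) : qp a p 0 = 1 := by simp [qp]

lemma qp_succ (a p : ℂ) (n : ℕ) : qp a p (n+1) = qp a p n * (1 - a * p^n) := by
  simp [qp, Finset.prod_range_succ]

lemma qp_add (a p : ℂ) (i j : ℕ) : qp a p (i+j) = qp a p i * qp (a * p^i) p j := by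
  induction j with
  | zero => simp [qp_zero]
  | succ j ih => rw [← add_assoc, qp_succ, ih, qp_succ]; ring

lemma qp_succ' (a p : ℂ) (n : ℕ) : qp a p (n+1) = (1 - a) * qp (a * p) p n := by
  rw [add_comm, qp_add]; simp [qp_succ, qp_zero]

/-- summand of the polynomial Saalschuetz sum -/
def sF (p a b e : ℂ) (j l : ℕ) : ℂ :=
  qp p p (j+l) / (qp p p j * qp p p l) * qp a p j * qp b p j * qp (a*b*e*p^j) p l * qp e p l * e^j

def sG (p a b e : ℂ) (n j : ℕ) : ℂ :=
  match j with
  | 0 => 0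
  | j+1 => - e * p^(n-j) * (1 - a*p^j) * (1 - b*p^j) * sF p a b e j (n-j)

lemma sF_rec (p a b e : ℂ) (hp : ∀ n, qp p p n ≠ 0) (n j : ℕ) (hj : j ≤ n) :
    sF p a b e j (n+1-j) = (1-b*e*p^n)*(1-a*e*p^n) * sF p a b e j (n-j)
      + sG p a b e n (j+1) - sG p a b e n j := by
  obtain ⟨l, rfl⟩ := Nat.exists_eq_add_of_le hj
  have e1 : j + l + 1 - j = l + 1 := by omega
  have e2 : j + l - j = l := by omega
  rw [e1, e2]
  have h1 := hp
  have key : ∀ n, (1 - p * p^n) ≠ 0 := fun n h => hp (n+1) (by rw [qp_succ, h, mul_zero])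
  cases j with
  | zero =>
    simp only [sF, sG, zero_add, qp_zero, pow_zero, qp_succ, Nat.sub_zero]
    have := hp l
    have := key l
    field_simp
    ring
  | succ j =>
    have e3 : j + 1 + l - j = l + 1 := by omega
    have e4 : j + 1 + l - (j+1) = l := by omega
    simp only [sG, e3, e4, sF]
    rw [show j + 1 + (l+1) = (j+l+1)+1 by ring, show j + 1 + l = (j+l)+1 by ring,
      show j + (l+1) = (j+l)+1 by ring]
    rw [qp_succ' (a*b*e*p^j)]
    rw [show a*b*e*p^j*p = a*b*e*p^(j+1) by ring]
    simp only [qp_succ]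
    have := hp l
    have := hp j
    have := key l
    have := key j
    have := key (j+l)
    field_simp
    ring

lemma saal_poly (p a b e : ℂ) (hp : ∀ n, qp p p n ≠ 0) (n : ℕ) :
    ∑ j ∈ range (n+1), sF p a b e j (n-j) = qp (b*e) p n * qp (a*e) p n := by
  induction n with
  | zero => simp [sF, qp_zero]
  | succ n ih =>
    rw [Finset.sum_range_succ, Finset.sum_congr rfl (fun j hj =>
      sF_rec p a b e hp n j (by simp at hj; omega))]
    simp only [add_sub_assoc, Finset.sum_add_distrib]
    rw [Finset.sum_range_sub, ← Finset.mul_sum, ih]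
    simp only [sG, sF, Nat.sub_self, qp_succ, qp_zero, add_zero, pow_zero]
    have := hp n
    have key : (1 - p * p^n) ≠ 0 := fun h => hp (n+1) (by rw [qp_succ, h, mul_zero])
    simp only [mul_one]
    rw [div_self this, div_self (mul_ne_zero this key)]
    ring


/-- integer-exponent version -/
def qz (p : ℂ) (a : ℤ) (n : ℕ) : ℂ := qp (p^a) p n


lemma qz_succ (p : ℂ) (h0 : p ≠ 0) (a : ℤ) (n : ℕ) : qz p a (n+1) = qz p a n * (1 - p^(a+n)) := by
  rw [qz, qp_succ, zpow_add₀ h0, zpow_natCast, qz]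

lemma qz_add (p : ℂ) (h0 : p ≠ 0) (a : ℤ) (i j : ℕ) : qz p a (i+j) = qz p a i * qz p (a+i) j := by
  rw [qz, qp_add, qz, qz, zpow_add₀ h0, zpow_natCast]

lemma qz_succ' (p : ℂ) (h0 : p ≠ 0) (a : ℤ) (n : ℕ) : qz p a (n+1) = (1 - p^a) * qz p (a+1) n := by
  rw [qz, qp_succ', qz, zpow_add₀ h0, zpow_one]

lemma qz_eq_zero (p : ℂ) (h0 : p ≠ 0) (a : ℤ) (n : ℕ) (ha : a ≤ 0) (hn : 0 < a + n) : qz p a n = 0 := by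
  rw [qz, qp, Finset.prod_eq_zero_iff]
  refine ⟨(-a).toNat, by simp; omega, ?_⟩
  rw [← zpow_natCast, ← zpow_add₀ h0, Int.toNat_of_nonneg (by omega)]
  simp

lemma qz_ne (p : ℂ) (h0 : p ≠ 0) (h1 : ∀ z : ℤ, z ≠ 0 → p^z ≠ 1) (a : ℤ) (n : ℕ) (h : 0 < a ∨ a + n ≤ 0) : qz p a n ≠ 0 := by
  rw [qz, qp, Finset.prod_ne_zero_iff]
  intro j hj
  simp at hj
  rw [← zpow_natCast, ← zpow_add₀ h0]
  exact sub_ne_zero.mpr (h1 _ (by omega)).symm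

lemma qz_rev (p : ℂ) (h0 : p ≠ 0) (x : ℤ) (k r : ℕ) :
    qz p (x-r) k * qz p (1-k-x) r = qz p x k * qz p (1-x) r * p^(-(k*r:ℤ)) := by
  induction r with
  | zero => simp [qz, qp_zero]
  | succ r ih =>
    have e := (qz_succ p h0 (x-r-1) k).symm.trans (qz_succ' p h0 (x-r-1) k)
    rw [qz_succ p h0, qz_succ p h0]
    rw [show x - r - 1 + 1 = x - r by ring] at e
    rw [show x - ((r+1:ℕ):ℤ) = x - r - 1 by push_cast; ring]
    have f1 : 1 - p^(1-k-x+r:ℤ) = - p^(1-k-x+r:ℤ) * (1 - p^(x-r-1+k)) := by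
      rw [mul_sub, neg_mul, neg_mul, ← zpow_add₀ h0]; ring_nf; simp; ring
    have f2 : 1 - p^(1-x+r:ℤ) = - p^(1-x+r:ℤ) * (1 - p^(x-r-1)) := by
      rw [mul_sub, neg_mul, neg_mul, ← zpow_add₀ h0]; ring_nf; simp; ring
    have f3 : p^(1-k-x+r:ℤ) = p^(1-x+r:ℤ) * p^(-k:ℤ) := by
      rw [← zpow_add₀ h0]; congr 1; ring
    have f4 : p^(-(k*(r+1:ℕ):ℤ)) = p^(-(k*r:ℤ)) * p^(-k:ℤ) := by
      rw [← zpow_add₀ h0]; congr 1; push_cast; ring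
    rw [f1, f2, f3, f4]
    linear_combination (- p^(1-x+r:ℤ) * p^(-k:ℤ) * qz p (1-k-x) r) * e
      + (- p^(1-x+r:ℤ) * p^(-k:ℤ) * (1-p^(x-r-1))) * ih

/-- second reversal -/
lemma qz_rev2 (p : ℂ) (h0 : p ≠ 0) (x : ℤ) (K l : ℕ) (hl : l ≤ K) :
    qz p (-K) l * qz p x K * qz p 1 (K-l) * p^l
      = qz p 1 K * qz p x (K-l) * qz p (1-K-x) l * p^(x*l) := by
  induction l with
  | zero => simp [qz, qp_zero]; ring
  | succ l ih =>
    obtain ⟨s, rfl⟩ := Nat.exists_eq_add_of_le hl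
    have i := ih (by omega)
    rw [show l + 1 + s - l = s + 1 by omega] at i
    rw [show l + 1 + s - (l+1) = s by omega]
    rw [qz_succ p h0 _ s, qz_succ p h0 _ s] at i
    rw [qz_succ p h0 _ l, qz_succ p h0 _ l]
    have f1 : 1 - p^(-(l+1+s:ℕ)+l:ℤ) = - p^(-1-s:ℤ) * (1 - p^(1+s:ℤ)) := by
      rw [mul_sub, neg_mul, neg_mul, ← zpow_add₀ h0]; push_cast; ring_nf; simp; ring
    have f2 : 1 - p^(1-(l+1+s:ℕ)-x+l:ℤ) = - p^(-s-x:ℤ) * (1 - p^(x+s:ℤ)) := by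
      rw [mul_sub, neg_mul, neg_mul, ← zpow_add₀ h0]; push_cast; ring_nf; simp; ring
    have f3 : p^(-1-s:ℤ) * p^(l+1) = p^(-s:ℤ) * p^l := by
      rw [← zpow_natCast, ← zpow_natCast, ← zpow_add₀ h0, ← zpow_add₀ h0]
      congr 1; push_cast; ring
    have f4 : p^(-s-x:ℤ) * p^(x*(l+1:ℕ)) = p^(-s:ℤ) * p^(x*l) := by
      rw [← zpow_add₀ h0, ← zpow_add₀ h0]
      congr 1; push_cast; ring
    rw [f1, f2]
    linear_combination (-p^(-s:ℤ)) * i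
      - qz p (-(l+1+s:ℕ)) l * qz p x (l+1+s) * qz p 1 s * (1 - p^(1+s:ℤ)) * f3
      + qz p 1 (l+1+s) * qz p x s * qz p (1-(l+1+s:ℕ)-x) l * (1 - p^(x+s:ℤ)) * f4

/-- third reversal -/
lemma qz_rev3 (p : ℂ) (h0 : p ≠ 0) (x y : ℤ) (i : ℕ) :
    qz p (x-i+1) i * qz p (-y) i * p^(y*i) = qz p (y-i+1) i * qz p (-x) i * p^(x*i) := by
  have h : ∀ x : ℤ, qz p (x-i+1) i = qz p (-x) i * p^(x*i) * ∏ s ∈ range i, (-p^(-s:ℤ)) := by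
    intro x
    rw [qz, qp, ← Finset.prod_range_reflect, qz, qp, _root_.zpow_mul, zpow_natCast]
    rw [← Finset.card_range i, ← Finset.prod_const, Finset.card_range,
      ← Finset.prod_mul_distrib, ← Finset.prod_mul_distrib]
    refine Finset.prod_congr rfl fun s hs => ?_
    simp at hs
    have : ((i - 1 - s : ℕ) : ℤ) = i - 1 - s := by omega
    rw [← zpow_natCast, ← zpow_natCast, ← zpow_add₀ h0, ← zpow_add₀ h0, this]
    rw [mul_assoc, mul_neg, ← zpow_add₀ h0, sub_mul, mul_neg, mul_neg, ← zpow_add₀ h0]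
    ring_nf; simp; ring
  rw [h x, h y]; ring

lemma hp1 (p : ℂ) (h0 : p ≠ 0) (h1 : ∀ z : ℤ, z ≠ 0 → p^z ≠ 1) (n : ℕ) : qp p p n ≠ 0 := by
  have := qz_ne p h0 h1 1 n (by omega)
  simpa [qz] using this

/-- finite q-binomial theorem -/
lemma qbinom (p : ℂ) (h0 : p ≠ 0) (h1 : ∀ z : ℤ, z ≠ 0 → p^z ≠ 1) (x : ℂ) (n : ℕ) :
    qp x p n = ∑ i ∈ range (n+1), qz p (-n) i / qz p 1 i * p^(n*i) * x^i := by
  induction n with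
  | zero => simp [qz, qp_zero]
  | succ n ih =>
    have hrec : ∀ i : ℕ, qz p (-(n+1:ℕ)) (i+1) / qz p 1 (i+1) * p^((n+1)*(i+1)) =
        qz p (-n) (i+1) / qz p 1 (i+1) * p^(n*(i+1)) - p^n * (qz p (-n) i / qz p 1 i * p^(n*i)) := by
      intro i
      rw [qz_succ' p h0 _ i, qz_succ p h0 _ i, qz_succ p h0 _ i]
      rw [show (-(n+1:ℕ) + 1 : ℤ) = -n by push_cast; ring]
      have a1 := qz_ne p h0 h1 1 i (by omega)
      have a2 : 1 - p^(1+i:ℤ) ≠ 0 := sub_ne_zero.mpr (h1 _ (by omega)).symm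
      rw [show (p^(-(n+1:ℕ):ℤ)) = (p^(n+1))⁻¹ by rw [_root_.zpow_neg, zpow_natCast]]
      rw [show p^(1+i:ℤ) = p^(i+1) by rw [← zpow_natCast]; congr 1; push_cast; ring] at *
      rw [show p^(-n+i:ℤ) = (p^n)⁻¹ * p^i by rw [zpow_add₀ h0, _root_.zpow_neg, zpow_natCast, zpow_natCast]]
      field_simp
      ring
    have hz : qz p (-n) (n+1) = 0 := qz_eq_zero p h0 _ _ (by omega) (by push_cast; omega)
    rw [qp_succ, Finset.sum_range_succ']
    simp only [hrec, sub_mul, Finset.sum_sub_distrib]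
    have E : qp x p n = ∑ i ∈ range (n+2), qz p (-n) i / qz p 1 i * p^(n*i) * x^i := by
      rw [Finset.sum_range_succ, hz, ih]; simp
    rw [Finset.sum_range_succ'] at E
    have E2 : ∑ i ∈ range (n+1), p^n * (qz p (-n) i / qz p 1 i * p^(n*i)) * x^(i+1)
       = p^n * x * qp x p n := by
      rw [ih, Finset.mul_sum]; refine Finset.sum_congr rfl fun i _ => by ring
    rw [E2, mul_sub, mul_one]
    nth_rewrite 1 [E]
    simp [qz, qp_zero]
    ring

lemma saal_int (p : ℂ) (h0 : p ≠ 0) (h1 : ∀ z : ℤ, z ≠ 0 → p^z ≠ 1) (a b x c : ℤ)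
    (hc : c = a + b + x) (n : ℕ) :
    ∑ j ∈ range (n+1), qz p 1 n / (qz p 1 j * qz p 1 (n-j)) * qz p a j * qz p b j *
      qz p (c+j) (n-j) * qz p x (n-j) * p^(x*j) = qz p (b+x) n * qz p (a+x) n := by
  have := saal_poly p (p^a) (p^b) (p^x) (hp1 p h0 h1) n
  simp only [qz, zpow_one]
  rw [zpow_add₀ h0, zpow_add₀ h0, ← this]
  refine Finset.sum_congr rfl fun j hj => ?_
  simp at hj
  rw [sF, show j + (n-j) = n by omega, hc, zpow_add₀ h0, zpow_add₀ h0, zpow_add₀ h0, _root_.zpow_mul,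
    zpow_natCast, zpow_natCast]

lemma saal_std (p : ℂ) (h0 : p ≠ 0) (h1 : ∀ z : ℤ, z ≠ 0 → p^z ≠ 1) (a b x c : ℤ)
    (hc : c = a + b + x) (K : ℕ) (g1 : qz p c K ≠ 0) (g2 : qz p x K ≠ 0)
    (g3 : ∀ l ≤ K, qz p (1-K-x) l ≠ 0) :
    ∑ l ∈ range (K+1), qz p (-K) l * qz p a l * qz p b l * p^l /
      (qz p 1 l * qz p c l * qz p (1-K-x) l)
      = qz p (b+x) K * qz p (a+x) K / (qz p c K * qz p x K) := by
  rw [← saal_int p h0 h1 a b x c hc K, Finset.sum_div]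
  refine Finset.sum_congr rfl fun l hl => ?_
  simp at hl
  have r2 := qz_rev2 p h0 x K l (by omega)
  have a1 := qz_ne p h0 h1 1 l (by omega)
  have a2 := qz_ne p h0 h1 1 (K-l) (by omega)
  have a3 := g3 l (by omega)
  have e := qz_add p h0 c l (K-l)
  rw [show l + (K-l) = K by omega] at e
  rw [e] at g1 ⊢
  have b1 := left_ne_zero_of_mul g1
  have b2 := right_ne_zero_of_mul g1
  field_simp
  linear_combination (qz p a l * qz p b l) * r2

/-- the coefficient `(p^{k+1})_s/(p)_s`, extended to integers -/
def atc (p : ℂ) (k : ℕ) (s : ℤ) : ℂ := qz p (s+1) k / qz p 1 k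

lemma at_nat (p : ℂ) (h0 : p ≠ 0) (h1 : ∀ z : ℤ, z ≠ 0 → p^z ≠ 1) (k r : ℕ) :
    qz p (k+1) r / qz p 1 r = atc p k r := by
  have e1 := qz_add p h0 1 k r
  have e2 := qz_add p h0 1 r k
  have a1 := qz_ne p h0 h1 1 r (by omega)
  have a2 := qz_ne p h0 h1 1 k (by omega)
  rw [add_comm r k] at e2
  rw [atc, add_comm (k:ℤ), add_comm (r:ℤ)]
  field_simp
  rw [← e2, e1, mul_comm]

lemma at_zero (p : ℂ) (h0 : p ≠ 0) (k : ℕ) (s : ℤ) (h : s < 0) (hs : -k ≤ s) : atc p k s = 0 := by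
  rw [atc, qz_eq_zero p h0 _ _ (by omega) (by omega), zero_div]

lemma at_rev (p : ℂ) (h0 : p ≠ 0) (k r : ℕ) (N : ℤ) :
    atc p k (N-r) * qz p (-N-k) r = atc p k N * qz p (-N) r * p^(-(k*r:ℤ)) := by
  have := qz_rev p h0 (N+1) k r
  rw [atc, atc, show N - r + 1 = N + 1 - r by ring, show -N-k = 1 - k - (N+1) by ring,
    show -N = 1 - (N+1) by ring]
  rw [div_mul_eq_mul_div, this]; ring

lemma lemD (p : ℂ) (h0 : p ≠ 0) (h1 : ∀ z : ℤ, z ≠ 0 → p^z ≠ 1) (k N j : ℕ) (hj : j ≤ N + k) :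
    ∑ r ∈ range (j+1), atc p k r * atc p k (N-r) *
      (qz p (-(2*k+1:ℕ)) (j-r) / qz p 1 (j-r) * p^((k+1)*(j-r)))
    = atc p k N * p^((k+1)*j) * qz p (-k) j * qz p (-N-2*k-1) j / (qz p 1 j * qz p (-N-k) j) := by
  have S := saal_int p h0 h1 (k+1) (-N) (-(2*k+1:ℕ)) (-N-k) (by push_cast; ring) j
  have b1 := qz_ne p h0 h1 1 j (by omega)
  have b2 := qz_ne p h0 h1 (-N-k) j (by omega)
  rw [show (-N + -(2*k+1:ℕ) : ℤ) = -N-2*k-1 by push_cast; ring,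
    show (k + 1 + -(2*k+1:ℕ) : ℤ) = -k by push_cast; ring] at S
  rw [mul_assoc _ (qz p (-k) j), mul_comm (qz p (-k) j), ← S, Finset.mul_sum, Finset.sum_div]
  refine Finset.sum_congr rfl fun r hr => ?_
  simp at hr
  have R := at_rev p h0 k r N
  rw [← at_nat p h0 h1 k r]
  have a1 := qz_ne p h0 h1 1 r (by omega)
  have a2 := qz_ne p h0 h1 1 (j-r) (by omega)
  have e := qz_add p h0 (-N-k) r (j-r)
  rw [show r + (j-r) = j by omega] at e
  have P : p^((k+1)*j) * p^((-(2*k+1:ℕ):ℤ)*r) = p^(-(k*r:ℤ)) * p^((k+1)*(j-r)) := by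
    rw [← zpow_natCast, ← zpow_natCast, ← zpow_add₀ h0, ← zpow_add₀ h0]
    congr 1; push_cast [show r ≤ j by omega]; ring
  rw [e] at b2 ⊢
  have c1 := left_ne_zero_of_mul b2
  have c2 := right_ne_zero_of_mul b2
  have R' : atc p k (N-r) = atc p k N * qz p (-N) r * p^(-(k*r:ℤ)) / qz p (-N-k) r := by
    rw [← R]; field_simp
  rw [R']
  generalize p^((k+1)*j) = A at *
  generalize p^((-(2*k+1:ℕ):ℤ)*r) = B at *
  generalize p^(-(k*r:ℤ)) = A' at *
  generalize p^((k+1)*(j-r)) = B' at *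
  field_simp
  linear_combination (-(qz p (k+1) r * atc p k N * qz p (-N) r * qz p (-(2*k+1:ℕ)) (j-r))) * P

/-- double sum term -/
def sE (p : ℂ) (k m n : ℕ) (t : ℤ) (i l : ℕ) : ℂ :=
  qz p (-k) (i+l) * qz p (-t) (i+l) * p^(i+l) /
    (qz p 1 (i+l) * qz p (-m) (i+l)) * (qz p (-n-k-1) i * qz p (m+1-t) i / qz p (-n) i /
    (qz p 1 i * qz p 1 l) * qz p (k+t-m) l * p^((k+t-m)*i))

lemma sears (p : ℂ) (h0 : p ≠ 0) (h1 : ∀ z : ℤ, z ≠ 0 → p^z ≠ 1) (k m n : ℕ) (t : ℤ)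
    (hkm : k ≤ m) (hmn : m ≤ n) :
    ∑ i ∈ range (k+1), qz p (-k) i * qz p (-n-k-1) i * p^((k+1)*i) / (qz p 1 i * qz p (-n) i)
      * atc p k (t-i) * atc p k (m-k-t+i)
    = atc p k (m-k) * ∑ j ∈ range (k+1), qz p (-k) j * qz p (k+1) j * qz p (-t) j *
        qz p (t-m-n-1) j / (qz p 1 j * qz p (-n) j * qz p (-m) j * qz p 1 j) * p^j := by
  have step1 : ∀ j ∈ range (k+1), qz p (-k) j * qz p (k+1) j * qz p (-t) j *
        qz p (t-m-n-1) j / (qz p 1 j * qz p (-n) j * qz p (-m) j * qz p 1 j) * p^j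
      = ∑ i ∈ range (j+1), sE p k m n t i (j-i) := by
    intro j hj
    simp at hj
    have S := saal_int p h0 h1 (-n-k-1) (m+1-t) (k+t-m) (-n) (by ring) j
    rw [show (m+1-t+(k+t-m):ℤ) = k+1 by ring, show (-n-k-1+(k+t-m):ℤ) = t-m-n-1 by ring] at S
    rw [show qz p (-k) j * qz p (k+1) j * qz p (-t) j * qz p (t-m-n-1) j =
      (qz p (k+1) j * qz p (t-m-n-1) j) * (qz p (-k) j * qz p (-t) j) by ring, ← S, Finset.sum_mul,
      Finset.sum_div, Finset.sum_mul]
    refine Finset.sum_congr rfl fun i hi => ?_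
    simp at hi
    have a1 := qz_ne p h0 h1 1 i (by omega)
    have a2 := qz_ne p h0 h1 1 (j-i) (by omega)
    have a3 := qz_ne p h0 h1 1 j (by omega)
    have a4 := qz_ne p h0 h1 (-m) j (by omega)
    have b := qz_ne p h0 h1 (-n) j (by omega)
    have e := qz_add p h0 (-n) i (j-i)
    rw [show i + (j-i) = j by omega] at *
    rw [e] at b ⊢
    have c1 := left_ne_zero_of_mul b
    have c2 := right_ne_zero_of_mul b
    simp only [sE, show i + (j-i) = j by omega]
    generalize p^(((k:ℤ)+t-m)*i) = A at *
    generalize p^j = B at *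
    field_simp
  rw [Finset.sum_congr rfl step1, Finset.sum_range_diag_flip (k+1) (sE p k m n t), Finset.mul_sum]
  refine Finset.sum_congr rfl fun i hi => ?_
  simp at hi
  obtain ⟨K, rfl⟩ := Nat.exists_eq_add_of_le (show i ≤ k by omega)
  rw [show i + K + 1 - i = K + 1 by omega]
  have S := saal_std p h0 h1 (i-t) (i+K+t-m) (1-i-K+m) (i+1) (by ring) K
    (qz_ne p h0 h1 _ _ (by omega)) (qz_ne p h0 h1 _ _ (by omega))
    (fun l hl => qz_ne p h0 h1 _ _ (by omega))
  have step2 : ∑ l ∈ range (K+1), sE p (i+K) m n t i l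
      = qz p (-(i+K:ℕ)) i * qz p (-t) i * p^i / (qz p 1 i * qz p (-m) i) *
         (qz p (-n-(i+K:ℕ)-1) i * qz p (m+1-t) i / qz p (-n) i / qz p 1 i * p^(((i+K:ℕ)+t-m)*i))
        * (qz p (t+1) K * qz p (m-t-K+1) K / (qz p (i+1) K * qz p (m-i-K+1) K)) := by
    rw [show (m-i-K+1:ℤ) = 1-i-K+m by ring, show (t+1:ℤ) = i+K+t-m + (1-i-K+m) by ring,
      show (m-t-K+1:ℤ) = i-t + (1-i-K+m) by ring, ← S, Finset.mul_sum]
    refine Finset.sum_congr rfl fun l hl => ?_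
    rw [sE]
    rw [qz_add p h0 _ i l, qz_add p h0 _ i l, qz_add p h0 _ i l, qz_add p h0 _ i l]
    rw [show (-(i+K:ℕ)+i:ℤ) = -K by push_cast; ring, show -t + i = i - t by ring,
      show (1+i:ℤ) = i + 1 by ring, show (1-K-(1-i-K+m):ℤ) = -m+i by ring,
      show ((i+K:ℕ)+t-m:ℤ) = i+K+t-m by push_cast; ring, pow_add]
    simp only [div_eq_mul_inv, mul_inv]
    ring
  rw [step2]
  have q1 : qz p 1 (i+K) = qz p 1 i * qz p (i+1) K := by
    rw [qz_add p h0, add_comm (1:ℤ)]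
  have q2 : qz p (m-(i+K:ℕ)+1) (i+K) = qz p (m-i-K+1) K * qz p (m-i+1) i := by
    rw [add_comm i K, qz_add p h0]; push_cast; congr 2 <;> ring
  have q3 : qz p (t-i+1) (i+K) = qz p (t-i+1) i * qz p (t+1) K := by
    rw [qz_add p h0]; congr 2; ring
  have q4 : qz p (m-(i+K:ℕ)-t+i+1) (i+K) = qz p (m-t-K+1) K * qz p (m+1-t) i := by
    rw [add_comm i K, qz_add p h0]; push_cast; congr 2 <;> ring
  rw [atc, atc, atc, q1, q2, q3, q4]
  have R := qz_rev3 p h0 t m i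
  have a1 := qz_ne p h0 h1 1 i (by omega)
  have a2 := qz_ne p h0 h1 (i+1) K (by omega)
  have a3 := qz_ne p h0 h1 (-n) i (by omega)
  have a4 := qz_ne p h0 h1 (-m) i (by omega)
  have a5 := qz_ne p h0 h1 (m-i-K+1) K (by omega)
  have P1 : p^((i+K+1)*i) = p^(((i:ℤ)+K)*i) * p^i := by
    rw [← zpow_natCast, ← zpow_natCast, ← zpow_add₀ h0]; congr 1; push_cast; ring
  have P2 : p^(((i+K:ℕ)+t-m)*i) = p^(((i:ℤ)+K)*i) * p^(t*i) / p^((m:ℤ)*i) := by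
    rw [← zpow_add₀ h0, ← zpow_sub₀ h0]; congr 1; push_cast; ring
  have P3 : p^((m:ℤ)*i) ≠ 0 := zpow_ne_zero _ h0
  rw [P1, P2]
  generalize p^((m:ℤ)*i) = X at *
  generalize p^(t*i) = Y at *
  generalize p^(((i:ℤ)+K)*i) = Z at *
  generalize p^i = W at *
  generalize qz p (-n-(i+K:ℕ)-1) i = Q1 at *
  field_simp
  linear_combination (qz p (-(i+K:ℕ)) i * Q1 * Z * W * qz p (t+1) K * qz p (m-t-K+1) K * qz p (m+1-t) i) * R

lemma int_exp (j : ℤ) : ∫ θ in (-Real.pi)..Real.pi, Complex.exp (θ * Complex.I) ^ j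
    = if j = 0 then (2 * Real.pi : ℂ) else 0 := by
  split_ifs with h
  · subst h; simp; ring
  · have hc : (j * Complex.I : ℂ) ≠ 0 := by simp [h]
    have e : ∀ θ : ℝ, Complex.exp (θ * Complex.I) ^ j = Complex.exp (j * Complex.I * θ) := by
      intro θ; rw [← Complex.exp_int_mul]; congr 1; ring
    simp only [e]
    rw [integral_exp_mul_complex hc, div_eq_zero_iff]
    left
    rw [sub_eq_zero, Complex.exp_eq_exp_iff_exists_int]
    exact ⟨j, by push_cast; ring⟩

lemma int_coeff (H : Polynomial ℂ) (t : ℕ) :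
    ∫ θ in (-Real.pi)..Real.pi, Complex.exp (θ * Complex.I) ^ (-(2*t:ℤ)) *
      H.eval (Complex.exp (θ * Complex.I) ^ 2) = 2 * Real.pi * H.coeff t := by
  have e : ∀ θ : ℝ, Complex.exp (θ * Complex.I) ^ (-(2*t:ℤ)) *
      H.eval (Complex.exp (θ * Complex.I) ^ 2) = ∑ s ∈ range (H.natDegree + 1),
        H.coeff s * Complex.exp (θ * Complex.I) ^ (2*s-2*t:ℤ) := by
    intro θ
    rw [Polynomial.eval_eq_sum_range, Finset.mul_sum]
    refine Finset.sum_congr rfl fun s _ => ?_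
    rw [← pow_mul, ← zpow_natCast, mul_left_comm, ← zpow_add₀ (Complex.exp_ne_zero _)]
    congr 2; push_cast; ring
  simp only [e]
  rw [intervalIntegral.integral_finsetSum]
  · simp only [intervalIntegral.integral_const_mul, int_exp]
    have : ∀ s : ℕ, (2*(s:ℤ)-2*t = 0) ↔ s = t := fun s => by omega
    simp only [this, mul_ite, mul_zero, Finset.sum_ite_eq', Finset.mem_range]
    split_ifs with h
    · ring
    · rw [Polynomial.coeff_eq_zero_of_natDegree_lt (by omega), mul_zero]
  · intro s _
    apply Continuous.intervalIntegrable
    refine continuous_const.mul ?_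
    refine Continuous.zpow₀ (by fun_prop) _ (fun θ => Or.inl (Complex.exp_ne_zero _))

lemma int_main (W : ℂ → ℂ) (hW : Continuous W) (N t : ℕ) (c : ℂ) (H : Polynomial ℂ)
    (h : ∀ z : ℂ, z ≠ 0 → (1 - z^2) * z^N * W ((z+z⁻¹)/2) = c * (z^(-(2*t:ℤ)) * H.eval (z^2))) :
    ((1 / (2 * Real.pi) : ℝ) : ℂ) * ∫ x in (-1 : ℝ)..1,
      4 * (1 - (x:ℂ)^2) / (Real.sqrt (1 - x^2) : ℂ) * W x * (Polynomial.Chebyshev.U ℂ (N:ℤ)).eval (x:ℂ)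
      = c * H.coeff t := by
  set g : ℝ → ℂ := fun x => 4 * (Real.sqrt (1 - x^2) : ℂ) * W x *
    (Polynomial.Chebyshev.U ℂ (N:ℤ)).eval (x:ℂ) with hg
  have e1 : ∀ x : ℝ, 4 * (1 - (x:ℂ)^2) / (Real.sqrt (1 - x^2) : ℂ) * W x *
      (Polynomial.Chebyshev.U ℂ (N:ℤ)).eval (x:ℂ) = g x := by
    intro x
    simp only [hg]
    congr 2
    rw [mul_div_assoc]
    congr 1
    have hd := congrArg (fun r : ℝ => (r:ℂ)) (Real.div_sqrt (x := 1 - x^2))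
    push_cast at hd
    exact hd
  simp only [e1]
  have hgc : Continuous g := by
    have : Continuous fun x : ℝ => (Polynomial.Chebyshev.U ℂ (N:ℤ)).eval (x:ℂ) :=
      (Polynomial.continuous _).comp Complex.continuous_ofReal
    have h2 : Continuous fun x : ℝ => W x := hW.comp Complex.continuous_ofReal
    have h3 : Continuous fun x : ℝ => ((Real.sqrt (1 - x^2) : ℝ) : ℂ) := by fun_prop
    exact ((continuous_const.mul h3).mul h2).mul this
  have sub := intervalIntegral.integral_deriv_smul_comp (a := 0) (b := Real.pi)
    (f := Real.cos) (f' := fun x => - Real.sin x) (g := g) (fun x _ => Real.hasDerivAt_cos x)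
    (by fun_prop) hgc
  rw [Real.cos_zero, Real.cos_pi, intervalIntegral.integral_symm (-1) 1] at sub
  set K : ℝ → ℂ := fun θ => (1 - Complex.exp (θ * Complex.I)^2) * Complex.exp (θ * Complex.I)^N *
    W (Real.cos θ) with hK
  have hKc : Continuous K := by
    have h2 : Continuous fun x : ℝ => W (Real.cos x) :=
      hW.comp (Complex.continuous_ofReal.comp Real.continuous_cos)
    exact Continuous.mul (by fun_prop) h2
  have hKnc : Continuous fun θ => K (-θ) := hKc.comp continuous_neg
  have e2 : ∀ θ ∈ Set.uIcc 0 Real.pi, (- Real.sin θ) • (g ∘ Real.cos) θ = -(K θ + K (-θ)) := by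
    intro θ hθ
    rw [Set.uIcc_of_le Real.pi_pos.le] at hθ
    have hs : Real.sqrt (1 - Real.cos θ^2) = Real.sin θ := by
      rw [← Real.sin_sq, Real.sqrt_sq (Real.sin_nonneg_of_nonneg_of_le_pi hθ.1 hθ.2)]
    simp only [Function.comp, hg, hs, hK, Real.cos_neg, Complex.real_smul]
    have hU := Polynomial.Chebyshev.U_complex_cos θ N
    rw [← Complex.ofReal_cos] at hU
    have hz := Complex.exp_ne_zero (θ * Complex.I)
    have hneg : Complex.exp (((-θ:ℝ):ℂ) * Complex.I) = (Complex.exp (θ * Complex.I))⁻¹ := by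
      rw [← Complex.exp_neg]; push_cast; ring_nf
    have hsin1 : Complex.sin θ = ((Complex.exp (θ * Complex.I))⁻¹ - Complex.exp (θ * Complex.I)) * Complex.I / 2 := by
      rw [Complex.sin, ← Complex.exp_neg]; ring_nf
    have hsin2 : Complex.sin (((N:ℤ)+1) * θ) = ((Complex.exp (θ * Complex.I)^(N+1))⁻¹
        - Complex.exp (θ * Complex.I)^(N+1)) * Complex.I / 2 := by
      rw [Complex.sin, ← Complex.exp_nat_mul, ← Complex.exp_neg]; push_cast; ring_nf
    have key : 4 * Complex.sin θ * Complex.sin (((N:ℤ)+1) * θ) =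
        (1 - Complex.exp (θ * Complex.I)^2) * Complex.exp (θ * Complex.I)^N +
        (1 - (Complex.exp (θ * Complex.I))⁻¹^2) * (Complex.exp (θ * Complex.I))⁻¹^N := by
      rw [hsin1, hsin2]
      generalize Complex.exp (θ * Complex.I) = z at *
      have : ((z⁻¹ - z) * Complex.I / 2) * (((z^(N+1))⁻¹ - z^(N+1)) * Complex.I / 2)
        = -((z⁻¹ - z) * ((z^(N+1))⁻¹ - z^(N+1)))/4 := by
        linear_combination ((z⁻¹ - z) * ((z^(N+1))⁻¹ - z^(N+1)))/4 * Complex.I_sq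
      rw [mul_assoc, this]
      simp only [inv_pow]
      field_simp
      ring
    rw [hneg, ← add_mul, ← key, ← hU]
    push_cast
    ring
  rw [intervalIntegral.integral_congr (g := fun θ => -(K θ + K (-θ))) e2,
    intervalIntegral.integral_neg, neg_inj, intervalIntegral.integral_add
      (hKc.intervalIntegrable _ _) (hKnc.intervalIntegrable _ _),
    intervalIntegral.integral_comp_neg, add_comm, neg_zero,
    intervalIntegral.integral_add_adjacent_intervals
      (hKc.intervalIntegrable _ _) (hKc.intervalIntegrable _ _)] at sub
  rw [← sub]
  have e3 : ∀ θ : ℝ, K θ = c * (Complex.exp (θ * Complex.I) ^ (-(2*t:ℤ)) *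
      H.eval (Complex.exp (θ * Complex.I) ^ 2)) := by
    intro θ
    simp only [hK]
    rw [← h _ (Complex.exp_ne_zero _), ← Complex.exp_neg, Complex.ofReal_cos, Complex.cos, neg_mul]
  simp only [e3]
  rw [intervalIntegral.integral_const_mul, int_coeff]
  have : (Real.pi:ℂ) ≠ 0 := by exact_mod_cast Real.pi_ne_zero
  push_cast
  field_simp

/-- the polynomial `Ĉ_M(u)` -/
def pA (p : ℂ) (k M : ℕ) : Polynomial ℂ :=
  ∑ r ∈ range (M+1), Polynomial.C (atc p k r * atc p k (M-r)) * Polynomial.X^r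

/-- the polynomial `(p^{-k}u;p)_{2k+1}` -/
def pB (p : ℂ) (k : ℕ) : Polynomial ℂ :=
  ∑ r ∈ range (2*k+1+1), Polynomial.C (qz p (-(2*k+1:ℕ)) r / qz p 1 r * p^((k+1)*r)) * Polynomial.X^r

lemma pA_coeff (p : ℂ) (k M r : ℕ) :
    (pA p k M).coeff r = if r ≤ M then atc p k r * atc p k (M-r) else 0 := by
  simp only [pA, Polynomial.finsetSum_coeff, Polynomial.coeff_C_mul, Polynomial.coeff_X_pow,
    mul_ite, mul_one, mul_zero, Finset.sum_ite_eq, Finset.mem_range, Nat.lt_succ_iff]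

lemma pA_coeff' (p : ℂ) (h0 : p ≠ 0) (k M r : ℕ) (h : r ≤ M + k) :
    (pA p k M).coeff r = atc p k r * atc p k (M-r) := by
  rw [pA_coeff]
  split_ifs with h1
  · rfl
  · rw [at_zero p h0 k (M-r) (by omega) (by omega), mul_zero]

lemma pB_coeff (p : ℂ) (h0 : p ≠ 0) (k r : ℕ) :
    (pB p k).coeff r = qz p (-(2*k+1:ℕ)) r / qz p 1 r * p^((k+1)*r) := by
  have : (pB p k).coeff r = if r < 2*k+1+1 then qz p (-(2*k+1:ℕ)) r / qz p 1 r * p^((k+1)*r) else 0 := by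
    simp only [pB, Polynomial.finsetSum_coeff, Polynomial.coeff_C_mul, Polynomial.coeff_X_pow]
    simp only [mul_ite, mul_one, mul_zero, Finset.sum_ite_eq, Finset.mem_range]
  rw [this]
  split_ifs with h
  · rfl
  · rw [qz_eq_zero p h0 _ _ (by omega) (by push_cast; omega)]; simp

lemma pB_eval (p : ℂ) (h0 : p ≠ 0) (h1 : ∀ z : ℤ, z ≠ 0 → p^z ≠ 1) (k : ℕ) (u : ℂ) :
    (pB p k).eval u = qp ((p^k)⁻¹ * u) p (2*k+1) := by
  rw [qbinom p h0 h1, pB, Polynomial.eval_finsetSum]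
  refine Finset.sum_congr rfl fun r _ => ?_
  simp only [Polynomial.eval_mul, Polynomial.eval_C, Polynomial.eval_pow, Polynomial.eval_X]
  rw [mul_pow, ← mul_assoc, mul_assoc _ (p^((2*k+1)*r))]
  congr 2
  rw [inv_pow, ← pow_mul, eq_mul_inv_iff_mul_eq₀ (pow_ne_zero _ h0), ← pow_add]
  congr 1; ring

/-- coefficients of `Ĉ_N (p^{-k}u)_{2k+1}` -/
def dD (p : ℂ) (k N j : ℕ) : ℂ :=
  atc p k N * p^((k+1)*j) * qz p (-k) j * qz p (-N-2*k-1) j / (qz p 1 j * qz p (-N-k) j)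

lemma pAB_coeff (p : ℂ) (h0 : p ≠ 0) (h1 : ∀ z : ℤ, z ≠ 0 → p^z ≠ 1) (k N j : ℕ) (hj : j ≤ N + k) :
    (pA p k N * pB p k).coeff j = dD p k N j := by
  rw [Polynomial.coeff_mul, Finset.Nat.sum_antidiagonal_eq_sum_range_succ
    (fun a b => (pA p k N).coeff a * (pB p k).coeff b), dD, ← lemD p h0 h1 k N j hj]
  refine Finset.sum_congr rfl fun r hr => ?_
  simp at hr
  rw [pA_coeff' p h0 _ _ _ (by omega), pB_coeff p h0]

lemma dD_zero (p : ℂ) (h0 : p ≠ 0) (k N j : ℕ) (hj : k < j) : dD p k N j = 0 := by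
  rw [dD, qz_eq_zero p h0 (-k) j (by omega) (by omega)]; simp

lemma H_coeff (p : ℂ) (h0 : p ≠ 0) (h1 : ∀ z : ℤ, z ≠ 0 → p^z ≠ 1) (k M N t : ℕ) (ht : t ≤ N + k) :
    (pA p k N * pB p k * pA p k M).coeff t = 
      ∑ i ∈ range (t+1), dD p k N i * (pA p k M).coeff (t-i) := by
  rw [Polynomial.coeff_mul, Finset.Nat.sum_antidiagonal_eq_sum_range_succ
    (fun a b => (pA p k N * pB p k).coeff a * (pA p k M).coeff b)]
  refine Finset.sum_congr rfl fun r hr => ?_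
  simp at hr
  rw [pAB_coeff p h0 h1 _ _ _ (by omega)]

lemma H_zero (p : ℂ) (h0 : p ≠ 0) (h1 : ∀ z : ℤ, z ≠ 0 → p^z ≠ 1) (k M N t : ℕ) (ht : t ≤ N + k)
    (hM : M + k < t) : (pA p k N * pB p k * pA p k M).coeff t = 0 := by
  rw [H_coeff p h0 h1 _ _ _ _ ht]
  refine Finset.sum_eq_zero fun i hi => ?_
  by_cases h : k < i
  · rw [dD_zero p h0 _ _ _ h, zero_mul]
  · rw [pA_coeff, if_neg (by omega), mul_zero]

lemma H_main (p : ℂ) (h0 : p ≠ 0) (h1 : ∀ z : ℤ, z ≠ 0 → p^z ≠ 1) (k M N t : ℕ) (hMN : M ≤ N)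
    (ht : t ≤ M + k) : (pA p k N * pB p k * pA p k M).coeff t =
      atc p k N * atc p k M * ∑ j ∈ range (k+1), qz p (-k) j * qz p (k+1) j * qz p (-t) j *
        qz p (t-(M+k:ℕ)-(N+k:ℕ)-1) j / (qz p 1 j * qz p (-(N+k:ℕ)) j * qz p (-(M+k:ℕ)) j * qz p 1 j) * p^j := by
  have S := sears p h0 h1 k (M+k) (N+k) t (by omega) (by omega)
  rw [show (((M+k:ℕ):ℤ)-k) = M by push_cast; ring] at S
  rw [H_coeff p h0 h1 _ _ _ _ (by omega), mul_assoc, ← S, Finset.mul_sum]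
  have e : ∀ i ∈ range (t+1), dD p k N i * (pA p k M).coeff (t-i) =
      dD p k N i * atc p k (t-i) * atc p k (M-t+i) := by
    intro i hi
    simp at hi
    rw [pA_coeff' p h0 _ _ _ (by omega)]
    push_cast [hi]
    rw [← mul_assoc, show (M - (t - i) : ℤ) = M - t + i by ring]
  rw [Finset.sum_congr rfl e]
  have s1 : ∑ i ∈ range (t+1), dD p k N i * atc p k (t-i) * atc p k (M-t+i) =
      ∑ i ∈ range (t+k+1), dD p k N i * atc p k (t-i) * atc p k (M-t+i) := by
    refine Finset.sum_subset (fun x => by simp; omega) fun i h h' => ?_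
    simp at h h'
    by_cases hk : k < i
    · rw [dD_zero p h0 _ _ _ hk]; simp
    · rw [at_zero p h0 k (t-i) (by omega) (by omega)]; simp
  have s2 : ∑ i ∈ range (k+1), dD p k N i * atc p k (t-i) * atc p k (M-t+i) =
      ∑ i ∈ range (t+k+1), dD p k N i * atc p k (t-i) * atc p k (M-t+i) := by
    refine Finset.sum_subset (fun x => by simp; omega) fun i h h' => ?_
    simp at h h'
    rw [dD_zero p h0 _ _ _ (by omega)]; simp
  rw [s1, ← s2]
  refine Finset.sum_congr rfl fun i _ => ?_
  rw [dD, show (-(N+k:ℕ)-k-1:ℤ) = -N-2*k-1 by push_cast; ring,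
    show (-(N+k:ℕ):ℤ) = -N-k by push_cast; ring]
  simp only [div_eq_mul_inv]
  ring

lemma weight_id (p u : ℂ) (h0 : p ≠ 0) (hu : u ≠ 0) (k : ℕ) :
    (1-u) * (∏ j ∈ Finset.Icc 1 k, ((1-u*p^j)*(1-u⁻¹*p^j))) * u^k =
      (-1)^k * (∏ j ∈ Finset.Icc 1 k, p^j) * qp ((p^k)⁻¹*u) p (2*k+1) := by
  induction k with
  | zero => simp [qp]
  | succ k ih =>
    rw [Finset.prod_Icc_succ_top (by omega), Finset.prod_Icc_succ_top (by omega),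
      show 2*(k+1)+1 = (2*k+1)+1+1 by ring, qp_succ', qp_succ,
      show (p^(k+1))⁻¹*u*p = (p^k)⁻¹*u by field_simp; ring]
    have e : (p^k)⁻¹*u*p^(2*k+1) = u*p^(k+1) := by field_simp; ring
    have e2 : (1-u*p^(k+1))*(1-u⁻¹*p^(k+1))*u = -p^(k+1)*(1-(p^(k+1))⁻¹*u)*(1-u*p^(k+1)) := by
      field_simp; ring
    rw [e]
    generalize ∏ j ∈ Finset.Icc 1 k, ((1-u*p^j)*(1-u⁻¹*p^j)) = P at *
    calc _ = ((1-u) * P * u^k) * ((1-u*p^(k+1))*(1-u⁻¹*p^(k+1))*u) := by ring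
      _ = _ := by rw [ih, e2]; ring

lemma prod_pow_id (q : ℂ) (k : ℕ) : ∏ j ∈ Finset.Icc 1 k, (q^2)^j = q^(k*(k+1)) := by
  induction k with
  | zero => simp
  | succ k ih => rw [Finset.prod_Icc_succ_top (by omega), ih]; ring

lemma ultra_eval (p β : ℂ) (h0 : p ≠ 0) (h1 : ∀ z : ℤ, z ≠ 0 → p^z ≠ 1) (k M : ℕ)
    (hβ : β = p^((k:ℤ)+1)) (z : ℂ) (hz : z ≠ 0) :
    z^M * ∑ r ∈ Finset.range (M + 1),
            qp β p r * qp β p (M - r) / (qp p p r * qp p p (M - r)) * z ^ ((M : ℤ) - 2 * r)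
      = (pA p k M).eval (z^2) := by
  rw [pA, Polynomial.eval_finsetSum, ← Finset.sum_range_reflect, Finset.mul_sum]
  refine Finset.sum_congr rfl fun r hr => ?_
  simp only [Polynomial.eval_mul, Polynomial.eval_C, Polynomial.eval_pow, Polynomial.eval_X]
  simp at hr
  have a1 := at_nat p h0 h1 k r
  have a2 := at_nat p h0 h1 k (M-r)
  rw [show ((M-r:ℕ):ℤ) = (M:ℤ)-r by omega] at a2
  rw [← a1, ← a2]
  simp only [qz, zpow_one, ← hβ]
  rw [show M + 1 - 1 - r = M - r by omega, show M - (M-r) = r by omega,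
    show ((M-r:ℕ):ℤ) = (M:ℤ)-r by omega]
  have : z^M * z^((M:ℤ)-2*(M-r)) = (z^2)^r := by
    rw [← pow_mul, ← zpow_natCast, ← zpow_natCast, ← zpow_add₀ hz]; congr 1; push_cast; ring
  rw [← this]
  simp only [div_eq_mul_inv, mul_inv]
  ring

lemma q_pow_ne (q : ℝ) (hq0 : 0 < q) (hq1 : q < 1) : ∀ z : ℤ, z ≠ 0 → ((q:ℂ)^2)^z ≠ 1 := by
  intro z hz h
  have h' : (q^2)^z = 1 := by exact_mod_cast h
  have hlt : q^2 < 1 := by nlinarith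
  exact hz ((zpow_eq_one_iff_right₀ (by positivity) hlt.ne).1 h')

lemma racah_sum (q : ℂ) (hq : q ≠ 0) (k m n t : ℕ) :
    qRacah (q^2) 1 1 (q ^ (-(2 * (m : ℤ) + 2))) (q ^ (-(2 * (n : ℤ) + 2))) k t =
    ∑ j ∈ range (k+1), qz (q^2) (-k) j * qz (q^2) (k+1) j * qz (q^2) (-t) j *
        qz (q^2) (t-m-n-1) j / (qz (q^2) 1 j * qz (q^2) (-n) j * qz (q^2) (-m) j * qz (q^2) 1 j) * (q^2)^j := by
  have h0 : q^2 ≠ 0 := pow_ne_zero _ hq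
  have hz : ∀ a : ℤ, (q^2)^a = q^(2*a) := fun a => by
    rw [_root_.zpow_mul]; norm_cast
  rw [qRacah]
  have hs : ∑ j ∈ range (min k t + 1), qz (q^2) (-k) j * qz (q^2) (k+1) j * qz (q^2) (-t) j *
        qz (q^2) (t-m-n-1) j / (qz (q^2) 1 j * qz (q^2) (-n) j * qz (q^2) (-m) j * qz (q^2) 1 j) * (q^2)^j
      = ∑ j ∈ range (k+1), qz (q^2) (-k) j * qz (q^2) (k+1) j * qz (q^2) (-t) j *
        qz (q^2) (t-m-n-1) j / (qz (q^2) 1 j * qz (q^2) (-n) j * qz (q^2) (-m) j * qz (q^2) 1 j) * (q^2)^j := by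
    refine Finset.sum_subset (fun x => by simp; omega) fun i h h' => ?_
    simp only [Finset.mem_range] at h h'
    rw [qz_eq_zero (q^2) h0 (-t) i (by omega) (by omega)]; simp
  rw [← hs]
  refine Finset.sum_congr rfl fun j _ => ?_
  have a1 : (1:ℂ) * 1 * (q^2)^(k+1) = (q^2)^((k:ℤ)+1) := by
    rw [one_mul, one_mul]; norm_cast
  have a2 : q ^ (-(2 * (m : ℤ) + 2)) * q ^ (-(2 * (n : ℤ) + 2)) * (q^2)^(t+1)
      = (q^2)^((t:ℤ)-m-n-1) := by
    rw [hz, ← zpow_natCast, hz, ← zpow_add₀ hq, ← zpow_add₀ hq]; congr 1; push_cast; ring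
  have a3 : ∀ n : ℕ, q ^ (-(2 * (n : ℤ) + 2)) * q^2 = (q^2)^(-(n:ℤ)) := by
    intro n
    rw [hz, ← zpow_natCast q 2, ← zpow_add₀ hq]; congr 1; push_cast; ring
  rw [a1, a2, one_mul, one_mul, a3, a3]
  simp only [qz, zpow_one]

lemma stmt_core (q : ℝ) (hq0 : 0 < q) (hq1 : q < 1)
    (C : ℂ → ℂ → ℕ → Polynomial ℂ) (hC : IsUltra C)
    (k M N t Nn : ℕ) (hN : (Nn:ℤ) = ((M+k:ℕ):ℤ) + ((N+k:ℕ):ℤ) - 2 * t) :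
        ((1 / (2 * Real.pi) : ℝ) : ℂ) *
            ∫ x in (-1 : ℝ)..1,
              (4 * (1 - (x : ℂ) ^ 2) *
                    ∏ j ∈ Finset.Icc 1 k,
                      (1 - 2 * (2 * (x : ℂ) ^ 2 - 1) * (q : ℂ) ^ (2 * j) +
                        (q : ℂ) ^ (4 * j))) /
                  (Real.sqrt (1 - x ^ 2) : ℂ) *
                (C ((q : ℂ) ^ 2) ((q : ℂ) ^ (2 * k + 2)) M).eval (x : ℂ) *
                (C ((q : ℂ) ^ 2) ((q : ℂ) ^ (2 * k + 2)) N).eval (x : ℂ) *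
                (Polynomial.Chebyshev.U ℂ (((M+k:ℕ):ℤ) + ((N+k:ℕ):ℤ) - 2 * t)).eval (x : ℂ) =
      ((-1 : ℂ) ^ k * (q : ℂ) ^ (k * (k + 1))) *
        (pA ((q:ℂ)^2) k N * pB ((q:ℂ)^2) k * pA ((q:ℂ)^2) k M).coeff t := by
  have hq : (q:ℂ) ≠ 0 := by exact_mod_cast hq0.ne'
  have h0 : (q:ℂ)^2 ≠ 0 := pow_ne_zero _ hq
  have h1 : ∀ z : ℤ, z ≠ 0 → ((q:ℂ)^2)^z ≠ 1 := q_pow_ne q hq0 hq1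
  have hβ : (q:ℂ)^(2*k+2) = ((q:ℂ)^2)^((k:ℤ)+1) := by
    rw [show ((k:ℤ)+1) = ((k+1:ℕ):ℤ) by push_cast; rfl, zpow_natCast, ← pow_mul]; ring_nf
  rw [← hN]
  rw [← int_main (fun x => (∏ j ∈ Finset.Icc 1 k,
      (1 - 2 * (2 * x ^ 2 - 1) * (q : ℂ) ^ (2 * j) + (q : ℂ) ^ (4 * j))) *
      (C ((q : ℂ) ^ 2) ((q : ℂ) ^ (2 * k + 2)) M).eval x *
      (C ((q : ℂ) ^ 2) ((q : ℂ) ^ (2 * k + 2)) N).eval x)]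
  · congr 1
    congr 1
    funext x
    ring
  · refine Continuous.mul (Continuous.mul ?_ (Polynomial.continuous _)) (Polynomial.continuous _)
    fun_prop
  · intro z hz
    have hu : z^2 ≠ 0 := pow_ne_zero _ hz
    have w := weight_id ((q:ℂ)^2) (z^2) h0 hu k
    rw [prod_pow_id, ← pB_eval _ h0 h1] at w
    have uM := ultra_eval ((q:ℂ)^2) _ h0 h1 k M hβ z hz
    have uN := ultra_eval ((q:ℂ)^2) _ h0 h1 k N hβ z hz
    rw [← (hC _ _ _).2 z hz] at uM uN
    have hP : ∏ j ∈ Finset.Icc 1 k, (1 - 2 * (2 * ((z+z⁻¹)/2) ^ 2 - 1) * (q : ℂ) ^ (2 * j) + (q : ℂ) ^ (4 * j))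
        = ∏ j ∈ Finset.Icc 1 k, ((1-z^2*((q:ℂ)^2)^j)*(1-(z^2)⁻¹*((q:ℂ)^2)^j)) := by
      refine Finset.prod_congr rfl fun j _ => ?_
      rw [← pow_mul, show 4*j = 2*j+2*j by ring, pow_add]
      field_simp
      ring
    have hzN : z^Nn = z^(-(2*t:ℤ)) * (z^M * z^N * (z^2)^k) := by
      rw [← zpow_natCast z Nn, hN, ← pow_mul, ← pow_add, ← pow_add, ← zpow_natCast, ← zpow_add₀ hz]
      congr 1; push_cast; ring
    rw [hP, hzN, Polynomial.eval_mul, Polynomial.eval_mul, ← uM, ← uN]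
    linear_combination (z^(-(2*t:ℤ)) * (z^M * (C ((q : ℂ) ^ 2) ((q : ℂ) ^ (2 * k + 2)) M).eval ((z+z⁻¹)/2)) *
      (z^N * (C ((q : ℂ) ^ 2) ((q : ℂ) ^ (2 * k + 2)) N).eval ((z+z⁻¹)/2))) * w

/-- evaluation of the integral of a product of two continuous
q-ultraspherical polynomials against a Chebyshev polynomial with respect to the
weight `w(x;q^{2k+2}|q²)/√(1-x²)`, in terms of q-Racah polynomials. -/
theorem stmt15 (q : ℝ) (hq0 : 0 < q) (hq1 : q < 1)
    (C : ℂ → ℂ → ℕ → Polynomial ℂ) (hC : IsUltra C)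
    (k m n t : ℕ) (hkm : k ≤ m) (hmn : m ≤ n) :
    ((m < t ∧ 2 * t ≤ m + n) →
        ((1 / (2 * Real.pi) : ℝ) : ℂ) *
            ∫ x in (-1 : ℝ)..1,
              (4 * (1 - (x : ℂ) ^ 2) *
                    ∏ j ∈ Finset.Icc 1 k,
                      (1 - 2 * (2 * (x : ℂ) ^ 2 - 1) * (q : ℂ) ^ (2 * j) +
                        (q : ℂ) ^ (4 * j))) /
                  (Real.sqrt (1 - x ^ 2) : ℂ) *
                (C ((q : ℂ) ^ 2) ((q : ℂ) ^ (2 * k + 2)) (m - k)).eval (x : ℂ) *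
                (C ((q : ℂ) ^ 2) ((q : ℂ) ^ (2 * k + 2)) (n - k)).eval (x : ℂ) *
                (Polynomial.Chebyshev.U ℂ ((m : ℤ) + (n : ℤ) - 2 * (t : ℤ))).eval (x : ℂ) =
          0) ∧
      (t ≤ m →
        ((1 / (2 * Real.pi) : ℝ) : ℂ) *
            ∫ x in (-1 : ℝ)..1,
              (4 * (1 - (x : ℂ) ^ 2) *
                    ∏ j ∈ Finset.Icc 1 k,
                      (1 - 2 * (2 * (x : ℂ) ^ 2 - 1) * (q : ℂ) ^ (2 * j) +
                        (q : ℂ) ^ (4 * j))) /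
                  (Real.sqrt (1 - x ^ 2) : ℂ) *
                (C ((q : ℂ) ^ 2) ((q : ℂ) ^ (2 * k + 2)) (m - k)).eval (x : ℂ) *
                (C ((q : ℂ) ^ 2) ((q : ℂ) ^ (2 * k + 2)) (n - k)).eval (x : ℂ) *
                (Polynomial.Chebyshev.U ℂ ((m : ℤ) + (n : ℤ) - 2 * (t : ℤ))).eval (x : ℂ) =
          (-1 : ℂ) ^ k * (q : ℂ) ^ (k * (k + 1)) * qp ((q : ℂ) ^ 2) ((q : ℂ) ^ 2) k *
            (qp ((q : ℂ) ^ (2 * k + 2)) ((q : ℂ) ^ 2) (m + n - 2 * k) /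
              qp ((q : ℂ) ^ 2) ((q : ℂ) ^ 2) (m + n - k)) *
            (qp ((q : ℂ) ^ (2 * k + 2)) ((q : ℂ) ^ 2) (m - k) /
              qp ((q : ℂ) ^ 2) ((q : ℂ) ^ 2) (m - k)) *
            (qp ((q : ℂ) ^ (2 * k + 2)) ((q : ℂ) ^ 2) (n - k) /
              qp ((q : ℂ) ^ 2) ((q : ℂ) ^ 2) (n - k)) *
            qRacah ((q : ℂ) ^ 2) 1 1 ((q : ℂ) ^ (-(2 * (m : ℤ) + 2)))
              ((q : ℂ) ^ (-(2 * (n : ℤ) + 2))) k t) := by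
  have hq : (q:ℂ) ≠ 0 := by exact_mod_cast hq0.ne'
  have h0 : (q:ℂ)^2 ≠ 0 := pow_ne_zero _ hq
  have h1 : ∀ z : ℤ, z ≠ 0 → ((q:ℂ)^2)^z ≠ 1 := q_pow_ne q hq0 hq1
  obtain ⟨M, rfl⟩ : ∃ M, m = M + k := ⟨m - k, by omega⟩
  obtain ⟨N, rfl⟩ : ∃ N, n = N + k := ⟨n - k, by omega⟩
  rw [Nat.add_sub_cancel, Nat.add_sub_cancel]
  constructor
  · rintro ⟨ht, ht2⟩
    rw [stmt_core q hq0 hq1 C hC k M N t (M+k+(N+k)-2*t) (by omega),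
      H_zero _ h0 h1 _ _ _ _ (by omega) ht, mul_zero]
  · intro ht
    rw [stmt_core q hq0 hq1 C hC k M N t (M+k+(N+k)-2*t) (by omega),
      H_main _ h0 h1 _ _ _ _ (by omega) ht, racah_sum _ hq]
    have hβ : (q:ℂ)^(2*k+2) = ((q:ℂ)^2)^((k:ℤ)+1) := by
      rw [show ((k:ℤ)+1) = ((k+1:ℕ):ℤ) by push_cast; rfl, zpow_natCast, ← pow_mul]; ring_nf
    have hA : ∀ r, qp ((q:ℂ)^(2*k+2)) ((q:ℂ)^2) r / qp ((q:ℂ)^2) ((q:ℂ)^2) r = atc ((q:ℂ)^2) k r := by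
      intro r
      rw [← at_nat _ h0 h1, hβ]; simp only [qz, zpow_one]
    have hB : qp ((q:ℂ)^2) ((q:ℂ)^2) k * (qp ((q:ℂ)^(2*k+2)) ((q:ℂ)^2) (M+k+(N+k)-2*k) /
        qp ((q:ℂ)^2) ((q:ℂ)^2) (M+k+(N+k)-k)) = 1 := by
      rw [show M+k+(N+k)-2*k = M+N by omega, show M+k+(N+k)-k = k+(M+N) by omega,
        ← mul_div_assoc, div_eq_one_iff_eq (hp1 _ h0 h1 _), qp_add _ _ k (M+N)]
      congr 2
      ring
    rw [hA, hA, mul_assoc ((-1)^k * _) (qp _ _ k), hB]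
    push_cast
    ring

end
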